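/- Let 0 < α ≤ 1, T > 0, and let h : (0,T) → ℝ be measurable with |h(τ)| ≤ M for almost every τ ∈ (0,T). Then for every λ > 0, |∫_0^T (T-τ)^{α-1} E_{α,α}(-λ (T-τ)^α) h(τ) dτ| ≤ M/λ. -/

import Mathlib

open Real MeasureTheory intervalIntegral

/-- The two-parameter Mittag-Leffler function (real arguments),
with the convention `1/Γ = 0` at the poles of `Γ` (as in Mathlib's `Real.Gamma`). -/
noncomputable def mittagLeffler (α β x : ℝ) : ℝ :=
  ∑' k : ℕ, x ^ k / Real.Gamma ((k : ℝ) * α + β)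

theorem ml_gamma_ratio {α x : ℝ} (hα : 0 < α) (hx : 1 < x) :
    Real.Gamma x * (x - 1) ^ α ≤ Real.Gamma (x + α) := by
  have h1 : 0 < 1 + α := by linarith
  have h := Real.Gamma_mul_add_mul_le_rpow_Gamma_mul_rpow_Gamma (s := x + α) (t := x - 1)
    (a := 1 / (1 + α)) (b := α / (1 + α)) (by linarith) (by linarith) (by positivity)
    (by positivity) (by field_simp)
  have e : 1 / (1 + α) * (x + α) + α / (1 + α) * (x - 1) = x := by field_simp; ring
  rw [e] at h
  have hg0 : 0 < Real.Gamma (x - 1) := Real.Gamma_pos_of_pos (by linarith)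
  have hg1 : 0 < Real.Gamma (x + α) := Real.Gamma_pos_of_pos (by linarith)
  have hg : 0 < Real.Gamma x := Real.Gamma_pos_of_pos (by linarith)
  have hrec : Real.Gamma x = (x - 1) * Real.Gamma (x - 1) := by
    have := Real.Gamma_add_one (s := x - 1) (by linarith)
    rwa [sub_add_cancel] at this
  have h2 := Real.rpow_le_rpow hg.le h h1.le
  rw [Real.mul_rpow (by positivity) (by positivity), ← Real.rpow_mul hg1.le,
    ← Real.rpow_mul hg0.le, div_mul_cancel₀ _ h1.ne', div_mul_cancel₀ _ h1.ne', Real.rpow_one,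
    Real.rpow_add hg, Real.rpow_one] at h2
  have h3 : Real.Gamma x ^ α = (x - 1) ^ α * Real.Gamma (x - 1) ^ α := by
    rw [hrec, Real.mul_rpow (by linarith) hg0.le]
  rw [h3, ← mul_assoc] at h2
  exact le_of_mul_le_mul_right h2 (by positivity)

theorem ml_summable {α : ℝ} (hα : 0 < α) {β : ℝ} (hβ : 0 < β) (x : ℝ) :
    Summable (fun k : ℕ => x ^ k / Real.Gamma ((k : ℝ) * α + β)) := by
  have ht : Filter.Tendsto (fun n : ℕ => ((n : ℝ) * α + β - 1) ^ α) Filter.atTop Filter.atTop := by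
    apply (tendsto_rpow_atTop hα).comp
    apply Filter.tendsto_atTop_add_const_right
    apply Filter.tendsto_atTop_add_const_right
    exact tendsto_natCast_atTop_atTop.atTop_mul_const hα
  have ht' : Filter.Tendsto (fun n : ℕ => ((n : ℝ) * α + β)) Filter.atTop Filter.atTop := by
    apply Filter.tendsto_atTop_add_const_right
    exact tendsto_natCast_atTop_atTop.atTop_mul_const hα
  refine summable_of_ratio_norm_eventually_le (r := 1/2) (by norm_num) ?_
  filter_upwards [ht.eventually_ge_atTop (2 * |x|), ht'.eventually_gt_atTop 1] with n hn hn1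
  have hr := ml_gamma_ratio hα hn1
  have e : ((n + 1 : ℕ) : ℝ) * α + β = (n : ℝ) * α + β + α := by push_cast; ring
  rw [e]
  set G := Real.Gamma ((n : ℝ) * α + β)
  have hG : 0 < G := Real.Gamma_pos_of_pos (by linarith)
  have hG' : 0 < Real.Gamma ((n : ℝ) * α + β + α) := Real.Gamma_pos_of_pos (by linarith)
  simp only [Real.norm_eq_abs, abs_div, abs_pow, abs_of_pos hG, abs_of_pos hG']
  rw [pow_succ]
  rw [div_le_iff₀ hG']
  have h4 : G * (2 * |x|) ≤ Real.Gamma ((n : ℝ) * α + β + α) :=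
    (mul_le_mul_of_nonneg_left hn hG.le).trans hr
  calc |x| ^ n * |x| = 1 / 2 * (|x| ^ n / G) * (G * (2 * |x|)) := by field_simp
    _ ≤ _ := by gcongr

theorem ml_continuous {α : ℝ} (hα : 0 < α) {β : ℝ} (hβ : 0 < β) :
    Continuous (mittagLeffler α β) := by
  rw [continuous_iff_continuousAt]
  intro x
  have : ContinuousOn (mittagLeffler α β) (Metric.ball 0 (|x| + 1)) := by
    unfold mittagLeffler
    refine continuousOn_tsum (u := fun k : ℕ => (|x| + 1) ^ k / Real.Gamma ((k : ℝ) * α + β))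
      (fun i => by fun_prop) (ml_summable hα hβ _) ?_
    intro n y hy
    have hG : 0 < Real.Gamma ((n : ℝ) * α + β) := Real.Gamma_pos_of_pos (by positivity)
    have hy' : |y| ≤ |x| + 1 := by simpa using (Metric.mem_ball.1 hy).le
    simp only [Real.norm_eq_abs, abs_div, abs_pow, abs_of_pos hG]
    gcongr
  exact this.continuousAt (Metric.isOpen_ball.mem_nhds (by simp))

theorem ml_beta {a b t : ℝ} (ha : 0 < a) (hb : 0 < b) (ht : 0 < t) :
    ∫ s in (0:ℝ)..t, (t - s) ^ (a - 1) * s ^ (b - 1) =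
      t ^ (a + b - 1) * (Real.Gamma a * Real.Gamma b / Real.Gamma (a + b)) := by
  have h := Complex.betaIntegral_scaled (b : ℂ) (a : ℂ) ht
  rw [Complex.betaIntegral_eq_Gamma_mul_div _ _ (by simpa) (by simpa)] at h
  apply Complex.ofReal_injective
  rw [← intervalIntegral.integral_ofReal]
  calc _ = ∫ x in (0:ℝ)..t, (x : ℂ) ^ ((b : ℂ) - 1) * ((t : ℂ) - x) ^ ((a : ℂ) - 1) := by
        apply intervalIntegral.integral_congr
        intro s hs
        rw [Set.uIcc_of_le ht.le] at hs
        simp only [Complex.ofReal_mul]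
        rw [Complex.ofReal_cpow (by linarith [hs.2]), Complex.ofReal_cpow hs.1]
        push_cast
        ring
    _ = _ := by
        rw [h]
        push_cast [Complex.ofReal_cpow ht.le, ← Complex.Gamma_ofReal]
        rw [add_comm (b : ℂ), mul_comm (Complex.Gamma b)]

theorem ml_beta_int {a b t : ℝ} (ha : 0 < a) (hb : 0 < b) (ht : 0 < t) :
    IntervalIntegrable (fun s => (t - s) ^ (a - 1) * s ^ (b - 1)) volume 0 t := by
  apply intervalIntegral.intervalIntegrable_of_integral_ne_zero
  rw [ml_beta ha hb ht]
  have h1 := Real.Gamma_pos_of_pos ha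
  have h2 := Real.Gamma_pos_of_pos hb
  have h3 := Real.Gamma_pos_of_pos (add_pos ha hb)
  positivity

theorem ml_e_continuous {α : ℝ} (hα : 0 < α) (lam : ℝ) :
    Continuous (fun s : ℝ => mittagLeffler α α (-lam * s ^ α)) :=
  (ml_continuous hα hα).comp (continuous_const.mul (Real.continuous_rpow_const hα.le))

/-- the Volterra identity -/
theorem ml_volterra {α lam t : ℝ} (hα : 0 < α) (ht : 0 < t) :
    lam * ∫ s in (0:ℝ)..t, (t - s) ^ (α - 1) * s ^ (α - 1) * mittagLeffler α α (-lam * s ^ α) =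
      t ^ (α - 1) - Real.Gamma α * (t ^ (α - 1) * mittagLeffler α α (-lam * t ^ α)) := by
  set G : ℕ → ℝ := fun n => Real.Gamma ((n : ℝ) * α + α) with hGdef
  have hG : ∀ n, 0 < G n := fun n => Real.Gamma_pos_of_pos (by positivity)
  have hGa : 0 < Real.Gamma α := Real.Gamma_pos_of_pos hα
  let F : ℕ → ℝ → ℝ := fun n s =>
    ((-lam) ^ n / G n) * ((t - s) ^ (α - 1) * s ^ (((n : ℝ) * α + α) - 1))
  have hb : ∀ n : ℕ, 0 < (n : ℝ) * α + α := fun n => by positivity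
  have hval : ∀ n : ℕ, ∫ s in (0:ℝ)..t, (t - s) ^ (α - 1) * s ^ (((n : ℝ) * α + α) - 1) =
      t ^ (α - 1) * (t ^ α) ^ (n + 1) * (Real.Gamma α * G n / G (n + 1)) := by
    intro n
    rw [ml_beta hα (hb n) ht]
    have e1 : α + ((n : ℝ) * α + α) = ((n + 1 : ℕ) : ℝ) * α + α := by push_cast; ring
    have e2 : α + ((n : ℝ) * α + α) - 1 = (α - 1) + α * ((n + 1 : ℕ) : ℝ) := by push_cast; ring
    rw [e2, e1, Real.rpow_add ht, Real.rpow_mul ht.le, Real.rpow_natCast]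
  have hFi : ∀ n, IntervalIntegrable (F n) volume 0 t := fun n =>
    (ml_beta_int hα (hb n) ht).const_mul _
  have hFi' : ∀ n, Integrable (F n) (volume.restrict (Set.Ioc 0 t)) := fun n =>
    (intervalIntegrable_iff_integrableOn_Ioc_of_le ht.le).1 (hFi n)
  have hFnorm : ∀ n, ∫ s in Set.Ioc 0 t, ‖F n s‖ =
      Real.Gamma α * t ^ (α - 1) * t ^ α * ((|lam| * t ^ α) ^ n / G (n + 1)) := by
    intro n
    have : ∫ s in Set.Ioc 0 t, ‖F n s‖ = ∫ s in Set.Ioc 0 t,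
        (|lam| ^ n / G n) * ((t - s) ^ (α - 1) * s ^ (((n : ℝ) * α + α) - 1)) := by
      apply setIntegral_congr_fun measurableSet_Ioc
      intro s hs
      have h1 : 0 ≤ (t - s) ^ (α - 1) := Real.rpow_nonneg (by linarith [hs.2]) _
      have h2 : 0 ≤ s ^ (((n : ℝ) * α + α) - 1) := Real.rpow_nonneg hs.1.le _
      simp only [F, Real.norm_eq_abs, abs_mul, abs_div, abs_pow, abs_neg, abs_of_pos (hG n),
        abs_of_nonneg h1, abs_of_nonneg h2]
    rw [this, ← intervalIntegral.integral_of_le ht.le, intervalIntegral.integral_const_mul, hval]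
    have := (hG n).ne'
    have := (hG (n+1)).ne'
    rw [mul_pow, pow_succ]
    field_simp
  have hsum1 : ∀ y : ℝ, Summable (fun n : ℕ => y ^ n / G (n + 1)) := by
    intro y
    convert ml_summable hα (β := 2 * α) (by positivity) y using 3 with n
    simp only [hGdef]
    congr 1
    push_cast; ring
  have hS := MeasureTheory.hasSum_integral_of_summable_integral_norm hFi' (by
    simp_rw [hFnorm]
    exact (hsum1 _).mul_left _)
  have hint : ∫ s in (0:ℝ)..t, (t - s) ^ (α - 1) * s ^ (α - 1) * mittagLeffler α α (-lam * s ^ α)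
      = ∑' n, ∫ s in Set.Ioc 0 t, F n s := by
    rw [hS.tsum_eq, intervalIntegral.integral_of_le ht.le]
    apply setIntegral_congr_fun measurableSet_Ioc
    intro s hs
    simp only [mittagLeffler, ← tsum_mul_left]
    congr 1
    ext n
    simp only [F, hGdef]
    have e2 : ((n : ℝ) * α + α) - 1 = (α - 1) + α * (n : ℝ) := by ring
    rw [e2, Real.rpow_add hs.1, Real.rpow_mul hs.1.le, Real.rpow_natCast, mul_pow]
    ring
  have hFv : ∀ n, ∫ s in Set.Ioc 0 t, F n s =
      Real.Gamma α * t ^ (α - 1) * t ^ α * ((-lam * t ^ α) ^ n / G (n + 1)) := by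
    intro n
    rw [← intervalIntegral.integral_of_le ht.le]
    simp only [F]
    rw [intervalIntegral.integral_const_mul, hval]
    have := (hG n).ne'
    have := (hG (n+1)).ne'
    rw [mul_pow, pow_succ]
    field_simp
  rw [hint]
  simp_rw [hFv]
  rw [tsum_mul_left]
  have hm : mittagLeffler α α (-lam * t ^ α) =
      1 / Real.Gamma α + (-lam * t ^ α) * ∑' n : ℕ, (-lam * t ^ α) ^ n / G (n + 1) := by
    unfold mittagLeffler
    rw [(ml_summable hα hα _).tsum_eq_zero_add, ← tsum_mul_left]
    congr 1
    · simp
    · congr 1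
      ext n
      rw [pow_succ]
      simp only [hGdef]
      ring
  rw [hm]
  field_simp
  ring

theorem ml_conv_int {α lam t : ℝ} (hα : 0 < α) (ht : 0 < t) :
    IntervalIntegrable (fun s : ℝ => (t - s) ^ (α - 1) * s ^ (α - 1) *
      mittagLeffler α α (-lam * s ^ α)) volume 0 t :=
  (ml_beta_int hα hα ht).mul_continuousOn (ml_e_continuous hα lam).continuousOn

theorem ml_k_int {α lam a b : ℝ} (hα : 0 < α) :
    IntervalIntegrable (fun s : ℝ => s ^ (α - 1) *
      mittagLeffler α α (-lam * s ^ α)) volume a b :=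
  (intervalIntegral.intervalIntegrable_rpow' (by linarith)).mul_continuousOn
    (ml_e_continuous hα lam).continuousOn

theorem ml_key {α lam t t0 : ℝ} (hα : 0 < α) (hα1 : α ≤ 1) (hlam : 0 < lam) (ht : 0 < t)
    (htt : t < t0) (hpos : ∀ s, 0 < s → s < t0 → 0 < mittagLeffler α α (-lam * s ^ α))
    (h0 : mittagLeffler α α (-lam * t0 ^ α) ≤ 0) :
    (t0 / t) ^ (α - 1) * (Real.Gamma α * (t ^ (α - 1) * mittagLeffler α α (-lam * t ^ α))) ≤
      lam * ∫ s in t..t0, (t0 - s) ^ (α - 1) * s ^ (α - 1) * mittagLeffler α α (-lam * s ^ α) := by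
  have ht0 : 0 < t0 := ht.trans htt
  have hGa : 0 < Real.Gamma α := Real.Gamma_pos_of_pos hα
  have v0 := ml_volterra (lam := lam) hα ht0
  have v := ml_volterra (lam := lam) hα ht
  have i0 := ml_conv_int (lam := lam) hα ht0
  have i := ml_conv_int (lam := lam) hα ht
  have i01 : IntervalIntegrable (fun s : ℝ => (t0 - s) ^ (α - 1) * s ^ (α - 1) *
      mittagLeffler α α (-lam * s ^ α)) volume 0 t := i0.mono_set (by
        rw [Set.uIcc_of_le ht.le, Set.uIcc_of_le ht0.le]
        exact Set.Icc_subset_Icc le_rfl htt.le)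
  have i02 : IntervalIntegrable (fun s : ℝ => (t0 - s) ^ (α - 1) * s ^ (α - 1) *
      mittagLeffler α α (-lam * s ^ α)) volume t t0 := i0.mono_set (by
        rw [Set.uIcc_of_le htt.le, Set.uIcc_of_le ht0.le]
        exact Set.Icc_subset_Icc ht.le le_rfl)
  rw [← intervalIntegral.integral_add_adjacent_intervals i01 i02, mul_add] at v0
  have hcmp : ∫ s in (0:ℝ)..t, (t0 - s) ^ (α - 1) * s ^ (α - 1) * mittagLeffler α α (-lam * s ^ α)
      ≤ ∫ s in (0:ℝ)..t, (t0 / t) ^ (α - 1) *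
        ((t - s) ^ (α - 1) * s ^ (α - 1) * mittagLeffler α α (-lam * s ^ α)) := by
    apply intervalIntegral.integral_mono_on_of_le_Ioo ht.le i01 (i.const_mul _)
    intro s hs
    have hts : 0 < t - s := by linarith [hs.2]
    have h1 : (t0 - s) ^ (α - 1) ≤ (t0 / t) ^ (α - 1) * (t - s) ^ (α - 1) := by
      rw [← Real.mul_rpow (by positivity) hts.le]
      apply Real.rpow_le_rpow_of_nonpos (by positivity) _ (by linarith)
      rw [div_mul_eq_mul_div, div_le_iff₀ ht]
      nlinarith [hs.1]
    have h2 := hpos s hs.1 (hs.2.trans htt)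
    have h3 : 0 < s ^ (α - 1) := Real.rpow_pos_of_pos hs.1 _
    calc _ ≤ ((t0 / t) ^ (α - 1) * (t - s) ^ (α - 1)) * s ^ (α - 1) *
          mittagLeffler α α (-lam * s ^ α) := by gcongr
      _ = _ := by ring
  rw [intervalIntegral.integral_const_mul] at hcmp
  have hcmp' := mul_le_mul_of_nonneg_left hcmp hlam.le
  rw [mul_left_comm, v] at hcmp'
  have hk0 : Real.Gamma α * (t0 ^ (α - 1) * mittagLeffler α α (-lam * t0 ^ α)) ≤ 0 :=
    mul_nonpos_of_nonneg_of_nonpos hGa.le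
      (mul_nonpos_of_nonneg_of_nonpos (by positivity) h0)
  have e : (t0 / t) ^ (α - 1) * t ^ (α - 1) = t0 ^ (α - 1) := by
    rw [← Real.mul_rpow (by positivity) ht.le, div_mul_cancel₀ _ ht.ne']
  rw [mul_sub, e] at hcmp'
  linarith

theorem ml_nonneg {α lam : ℝ} (hα : 0 < α) (hα1 : α ≤ 1) (hlam : 0 < lam) {t1 : ℝ} (ht1 : 0 ≤ t1) :
    0 ≤ mittagLeffler α α (-lam * t1 ^ α) := by
  by_contra! hneg
  have hGa : 0 < Real.Gamma α := Real.Gamma_pos_of_pos hα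
  have hc := ml_e_continuous hα lam
  set e : ℝ → ℝ := fun s : ℝ => mittagLeffler α α (-lam * s ^ α) with he
  have he0 : 0 < e 0 := by
    simp only [he, Real.zero_rpow hα.ne', mul_zero, mittagLeffler]
    rw [tsum_eq_single 0]
    · simpa using hGa
    · intro n hn; simp [hn]
  let S : Set ℝ := Set.Icc 0 t1 ∩ e ⁻¹' (Set.Iic 0)
  have hScomp : IsCompact S := isCompact_Icc.inter_right (isClosed_Iic.preimage hc)
  obtain ⟨t0, ht0S, ht0min⟩ := hScomp.exists_isLeast ⟨t1, ⟨ht1, le_rfl⟩, hneg.le⟩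
  have het0 : e t0 ≤ 0 := ht0S.2
  have ht0 : 0 < t0 := by
    rcases ht0S.1.1.lt_or_eq with h | h
    · exact h
    · rw [← h] at het0; linarith
  have hpos : ∀ s, 0 < s → s < t0 → 0 < e s := by
    intro s hs hst
    by_contra! hh
    have := ht0min (show s ∈ S from ⟨⟨hs.le, hst.le.trans ht0S.1.2⟩, hh⟩)
    linarith
  -- choose t close to t0
  have hlim : Filter.Tendsto (fun t : ℝ => lam * ((t0 - t) ^ α / α)) (nhdsWithin t0 (Set.Iio t0))
      (nhds 0) := by
    have : Continuous (fun t : ℝ => lam * ((t0 - t) ^ α / α)) := by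
      have := Real.continuous_rpow_const hα.le
      exact continuous_const.mul ((this.comp (continuous_const.sub continuous_id)).div_const _)
    have h := (this.tendsto t0).mono_left (nhdsWithin_le_nhds (s := Set.Iio t0))
    simpa [Real.zero_rpow hα.ne'] using h
  have hev1 := hlim.eventually_lt_const (show (0:ℝ) < Real.Gamma α / 2 by positivity)
  have hev2 : ∀ᶠ t in nhdsWithin t0 (Set.Iio t0), t0 / 2 < t :=
    nhdsWithin_le_nhds (lt_mem_nhds (by linarith))
  have hev3 : ∀ᶠ t in nhdsWithin t0 (Set.Iio t0), t < t0 := self_mem_nhdsWithin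
  obtain ⟨t, hsm, ht2, htt⟩ := (hev1.and (hev2.and hev3)).exists
  have htpos : 0 < t := by linarith
  have hkc : ContinuousOn (fun s => s ^ (α - 1) * e s) (Set.Icc t t0) := by
    apply ContinuousOn.mul _ hc.continuousOn
    intro s hs
    exact (Real.continuousAt_rpow_const _ _ (Or.inl (by linarith [hs.1]))).continuousWithinAt
  obtain ⟨u, hu, humax⟩ := isCompact_Icc.exists_isMaxOn ⟨t, le_rfl, htt.le⟩ hkc
  set K := u ^ (α - 1) * e u with hK
  have hKpos : 0 < K := lt_of_lt_of_le
    (mul_pos (Real.rpow_pos_of_pos htpos _) (hpos t htpos htt)) (humax ⟨le_rfl, htt.le⟩)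
  have hu0 : 0 < u := by linarith [hu.1]
  have hut : u < t0 := by
    rcases hu.2.lt_or_eq with h | h
    · exact h
    · rw [hK, h] at hKpos
      have : t0 ^ (α - 1) * e t0 ≤ 0 :=
        mul_nonpos_of_nonneg_of_nonpos (by positivity) het0
      linarith
  have key := ml_key hα hα1 hlam hu0 hut hpos het0
  have hratio : 1 / 2 ≤ (t0 / u) ^ (α - 1) := by
    have h2 : t0 / u ≤ 2 := by rw [div_le_iff₀ hu0]; linarith [hu.1]
    calc (1:ℝ) / 2 = 2 ^ (-1 : ℝ) := by rw [Real.rpow_neg_one]; norm_num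
      _ ≤ 2 ^ (α - 1) := Real.rpow_le_rpow_of_exponent_le (by norm_num) (by linarith)
      _ ≤ _ := Real.rpow_le_rpow_of_nonpos (by positivity) h2 (by linarith)
  have hI : ∫ s in u..t0, (t0 - s) ^ (α - 1) = (t0 - u) ^ α / α := by
    rw [intervalIntegral.integral_comp_sub_left (fun s => s ^ (α - 1)) t0, sub_self,
      integral_rpow (Or.inl (by linarith)), sub_add_cancel, Real.zero_rpow hα.ne', sub_zero]
  have hIi : IntervalIntegrable (fun s => (t0 - s) ^ (α - 1)) volume u t0 := by
    have := (intervalIntegral.intervalIntegrable_rpow' (a := t0 - u) (b := 0)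
      (show -1 < α - 1 by linarith)).comp_sub_left t0
    simpa using this
  have hup : ∫ s in u..t0, (t0 - s) ^ (α - 1) * s ^ (α - 1) * e s ≤
      ∫ s in u..t0, (t0 - s) ^ (α - 1) * K := by
    apply intervalIntegral.integral_mono_on hut.le _ (hIi.mul_const _)
    · intro s hs
      rw [mul_assoc]
      exact mul_le_mul_of_nonneg_left (humax ⟨hu.1.trans hs.1, hs.2⟩)
        (Real.rpow_nonneg (by linarith [hs.2]) _)
    · refine (ml_conv_int (lam := lam) hα ht0).mono_set ?_
      rw [Set.uIcc_of_le hut.le, Set.uIcc_of_le ht0.le]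
      exact Set.Icc_subset_Icc hu0.le le_rfl
  rw [intervalIntegral.integral_mul_const, hI] at hup
  have h5 : (t0 - u) ^ α / α ≤ (t0 - t) ^ α / α := by
    have : (t0 - u) ^ α ≤ (t0 - t) ^ α :=
      Real.rpow_le_rpow (by linarith) (by linarith [hu.1]) hα.le
    gcongr
  have h6 : 1 / 2 * (Real.Gamma α * K) ≤ lam * ((t0 - t) ^ α / α * K) :=
    calc _ ≤ (t0 / u) ^ (α - 1) * (Real.Gamma α * K) := by gcongr
      _ ≤ _ := key
      _ ≤ lam * ((t0 - u) ^ α / α * K) := by gcongr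
      _ ≤ _ := by gcongr
  nlinarith

theorem ml_k_le {α lam T : ℝ} (hα : 0 < α) (hα1 : α ≤ 1) (hlam : 0 < lam) (hT : 0 < T) :
    ∫ s in (0:ℝ)..T, s ^ (α - 1) * mittagLeffler α α (-lam * s ^ α) ≤ 1 / lam := by
  have v := ml_volterra (lam := lam) hα hT
  have hGa : 0 < Real.Gamma α := Real.Gamma_pos_of_pos hα
  have hTp : 0 < T ^ (α - 1) := Real.rpow_pos_of_pos hT _
  have hcmp : ∫ s in (0:ℝ)..T, T ^ (α - 1) * (s ^ (α - 1) * mittagLeffler α α (-lam * s ^ α)) ≤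
      ∫ s in (0:ℝ)..T, (T - s) ^ (α - 1) * s ^ (α - 1) * mittagLeffler α α (-lam * s ^ α) := by
    apply intervalIntegral.integral_mono_on_of_le_Ioo hT.le ((ml_k_int hα).const_mul _)
      (ml_conv_int hα hT)
    intro s hs
    rw [mul_assoc]
    refine mul_le_mul_of_nonneg_right (Real.rpow_le_rpow_of_nonpos (by linarith [hs.2])
      (by linarith [hs.1]) (by linarith)) ?_
    exact mul_nonneg (Real.rpow_nonneg hs.1.le _) (ml_nonneg hα hα1 hlam hs.1.le)
  rw [intervalIntegral.integral_const_mul] at hcmp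
  have h1 := mul_le_mul_of_nonneg_left hcmp hlam.le
  have h2 : 0 ≤ Real.Gamma α * (T ^ (α - 1) * mittagLeffler α α (-lam * T ^ α)) :=
    mul_nonneg hGa.le (mul_nonneg hTp.le (ml_nonneg hα hα1 hlam hT.le))
  rw [v] at h1
  rw [le_div_iff₀ hlam]
  refine le_of_mul_le_mul_left ?_ hTp
  linarith

theorem integral_decay_bound (α T M lam : ℝ) (hα0 : 0 < α) (hα1 : α ≤ 1)
    (hT : 0 < T) (hlam : 0 < lam)
    (h : ℝ → ℝ) (hmeas : Measurable h)
    (hbdd : ∀ᵐ τ ∂(volume.restrict (Set.Ioo 0 T)), |h τ| ≤ M) :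
    |∫ τ in (0:ℝ)..T,
        (T - τ) ^ (α - 1) * mittagLeffler α α (-lam * (T - τ) ^ α) * h τ|
      ≤ M / lam := by
  have hM : 0 ≤ M := by
    have hne : (volume.restrict (Set.Ioo 0 T)) ≠ 0 := by
      intro h0
      have := Measure.restrict_eq_zero.1 h0
      simp [hT] at this
      linarith
    haveI : Filter.NeBot (ae (volume.restrict (Set.Ioo 0 T))) := ae_neBot.2 hne
    obtain ⟨x, hx⟩ := hbdd.exists
    exact (abs_nonneg _).trans hx
  have hki : IntervalIntegrable (fun τ => (T - τ) ^ (α - 1) *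
      mittagLeffler α α (-lam * (T - τ) ^ α)) volume 0 T := by
    have := (ml_k_int (lam := lam) (a := T) (b := 0) hα0).comp_sub_left T
    simpa using this
  have hle := ml_k_le hα0 hα1 hlam hT
  have hsub : ∫ τ in (0:ℝ)..T, (T - τ) ^ (α - 1) * mittagLeffler α α (-lam * (T - τ) ^ α) =
      ∫ s in (0:ℝ)..T, s ^ (α - 1) * mittagLeffler α α (-lam * s ^ α) := by
    rw [intervalIntegral.integral_comp_sub_left
      (fun s => s ^ (α - 1) * mittagLeffler α α (-lam * s ^ α)) T]
    simp
  rw [restrict_Ioo_eq_restrict_Ioc, ae_restrict_iff' measurableSet_Ioc] at hbdd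
  have h1 : ‖∫ τ in (0:ℝ)..T,
        (T - τ) ^ (α - 1) * mittagLeffler α α (-lam * (T - τ) ^ α) * h τ‖ ≤
      ∫ τ in (0:ℝ)..T, (T - τ) ^ (α - 1) * mittagLeffler α α (-lam * (T - τ) ^ α) * M := by
    apply intervalIntegral.norm_integral_le_of_norm_le hT.le _ (hki.mul_const _)
    filter_upwards [hbdd] with τ hτ hm
    have hk : 0 ≤ (T - τ) ^ (α - 1) * mittagLeffler α α (-lam * (T - τ) ^ α) :=
      mul_nonneg (Real.rpow_nonneg (by linarith [hm.2]) _)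
        (ml_nonneg hα0 hα1 hlam (by linarith [hm.2]))
    rw [norm_mul, Real.norm_of_nonneg hk]
    exact mul_le_mul_of_nonneg_left (hτ hm) hk
  rw [Real.norm_eq_abs, intervalIntegral.integral_mul_const, hsub] at h1
  refine h1.trans ?_
  calc _ ≤ 1 / lam * M := mul_le_mul_of_nonneg_right hle hM
    _ = _ := by ring
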